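/- For all integers n ≥ 1 and 0 ≤ i ≤ n−1, one has Σ_{k=0}^{n} f'_{n,i}(k) = 0. -/

import Mathlib

/-- `invFact m = 1/m!`, with the convention `1/m! = 0` for negative integers `m`. -/
def invFact (m : ℤ) : ℚ := if 0 ≤ m then ((m.toNat).factorial : ℚ)⁻¹ else 0

/-- `f'_{n,i}(k) = (−1)^{k+1}·(3n−3k+2)·C_{n−k}·(n+k+1)!·(2n−k+1)!·(2n−i−k)!
   / (k!·(3n−k+2)!·(n+i−2k+1)!·(n+k−2i)!)`, with `1/m! = 0` for `m < 0`. -/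
def f'nik (n i k : ℕ) : ℚ :=
  (-1)^(k+1) * (3*(n:ℚ) - 3*(k:ℚ) + 2) * (catalan (n-k) : ℚ) *
    (Nat.factorial (n+k+1) : ℚ) * (Nat.factorial (2*n-k+1) : ℚ) *
    (Nat.factorial (2*n-i-k) : ℚ) /
    ((Nat.factorial k : ℚ) * (Nat.factorial (3*n-k+2) : ℚ)) *
    invFact ((n:ℤ) + (i:ℤ) - 2*(k:ℤ) + 1) * invFact ((n:ℤ) + (k:ℤ) - 2*(i:ℤ))

/-!
Creative telescoping in `k`: writing `S i = ∑ k ≤ n, f'nik n i k`, Zeilberger's algorithm produces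
a hypergeometric `G` with `a i * f'nik n i k + b i * f'nik n (i + 1) k = G (k + 1) - G k`, where
`a i > 0` and `b i` contains the factor `n - (i + 1)`. Since `G` vanishes at `k = 0` and at
`k = n + 1`, summation gives `a i * S i + b i * S (i + 1) = 0`. As `b (n - 1) = 0`, this forces
`S (n - 1) = 0`, and then `S i = 0` for every `i < n` by descending induction on `i`.
-/

open scoped Nat

lemma invFact_of_neg {m : ℤ} (hm : m < 0) : invFact m = 0 :=
  if_neg hm.not_ge

lemma invFact_natCast (m : ℕ) : invFact m = (m ! : ℚ)⁻¹ :=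
  if_pos m.cast_nonneg

lemma invFact_sub_one (m : ℤ) : invFact (m - 1) = m * invFact m := by
  rcases lt_trichotomy m 0 with hneg | rfl | hpos
  · rw [invFact_of_neg hneg, invFact_of_neg (by lia), mul_zero]
  · rw [invFact_of_neg (by lia), Int.cast_zero, zero_mul]
  · obtain ⟨p, rfl⟩ : ∃ p : ℕ, m = (p + 1 : ℕ) := ⟨(m - 1).toNat, by lia⟩
    rw [show ((p + 1 : ℕ) : ℤ) - 1 = p by lia, invFact_natCast, invFact_natCast,
      Nat.factorial_succ]
    push_cast
    field_simp

lemma invFact_sub_two (m : ℤ) : invFact (m - 2) = m * (m - 1) * invFact m := by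
  rw [show m - 2 = m - 1 - 1 by ring, invFact_sub_one, invFact_sub_one]
  push_cast
  ring

lemma add_two_mul_catalan_succ (m : ℕ) :
    (m + 2) * catalan (m + 1) = 2 * (2 * m + 1) * catalan m := by
  refine Nat.eq_of_mul_eq_mul_left m.succ_pos ?_
  calc (m + 1) * ((m + 2) * catalan (m + 1))
      = (m + 1) * (m + 1).centralBinom := by rw [← succ_mul_catalan_eq_centralBinom]
    _ = 2 * (2 * m + 1) * m.centralBinom := Nat.succ_mul_centralBinom_succ m
    _ = (m + 1) * (2 * (2 * m + 1) * catalan m) := by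
      rw [← succ_mul_catalan_eq_centralBinom]; ring

/-- The part of the summand built from ordinary factorials, with `(2 * n - k + 1)!` and
`(2 * n - i - k)!` lowered by one so that `f'nik n i k` and `f'nik n (i + 1) k` are both polynomial
multiples of it times values of `invFact`. The truncated subtractions are genuine for `i < n` and
`k ≤ n`. -/
def factorialFactor (n i k : ℕ) : ℚ :=
  (-1) ^ (k + 1) * catalan (n - k) * (n + k + 1)! * (2 * n - k)! * (2 * n - i - k - 1)! /
    (k ! * (3 * n - k + 2)!)

/-- The common hypergeometric term of which `f'nik n i k`, `f'nik n (i + 1) k` and the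
values at `k` and `k + 1` of the certificate `zeilbergerCert n i` are polynomial multiples. -/
def commonFactor (n i k : ℕ) : ℚ :=
  factorialFactor n i k * invFact (n + i - 2 * k + 2) * invFact (n + k - 2 * i)

/-- The certificate `G` found by Zeilberger's algorithm for the sum of `f'nik n i k` over `k`: its
forward difference in `k` is a combination of `f'nik n i k` and `f'nik n (i + 1) k` with
coefficients independent of `k`. -/
def zeilbergerCert (n i k : ℕ) : ℚ :=
  6 * (i - n) * (2 * n - 2 * k + 1) * (2 * n - k + 2) * k * (n + k - 2 * i) * (2 * n - k + 1) *
    (2 * n - i - k) * commonFactor n i k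

lemma zeilbergerCert_zero (n i : ℕ) : zeilbergerCert n i 0 = 0 := by
  simp [zeilbergerCert]

section

variable {n i k : ℕ}

lemma commonFactor_succ_self (hi : i < n) : commonFactor n i (n + 1) = 0 := by
  have hneg : (n : ℤ) + i - 2 * (n + 1 : ℕ) + 2 < 0 := by lia
  rw [commonFactor, invFact_of_neg hneg, mul_zero, zero_mul]

lemma zeilbergerCert_succ_self (hi : i < n) : zeilbergerCert n i (n + 1) = 0 := by
  rw [zeilbergerCert, commonFactor_succ_self hi, mul_zero]

lemma f'nik_eq_mul_commonFactor (hi : i < n) (hk : k ≤ n) :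
    f'nik n i k =
      (3 * n - 3 * k + 2) * (2 * n - k + 1) * (2 * n - i - k) * (n + i - 2 * k + 2) *
        commonFactor n i k := by
  have hinv := invFact_sub_one (n + i - 2 * k + 2)
  rw [show (n : ℤ) + i - 2 * k + 2 - 1 = n + i - 2 * k + 1 by ring] at hinv
  have hfact : (2 * n - i - k)! = (2 * n - i - k) * (2 * n - i - k - 1)! :=
    (Nat.mul_factorial_pred (by lia)).symm
  rw [f'nik, commonFactor, factorialFactor, hinv, hfact, Nat.factorial_succ (2 * n - k)]
  push_cast [Nat.cast_sub (show k ≤ 2 * n - i by lia), Nat.cast_sub (show i ≤ 2 * n by lia),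
    Nat.cast_sub (show k ≤ 2 * n by lia)]
  ring

lemma f'nik_succ_eq_mul_commonFactor (hk : k ≤ n) :
    f'nik n (i + 1) k =
      (3 * n - 3 * k + 2) * (2 * n - k + 1) * (n + k - 2 * i) * (n + k - 2 * i - 1) *
        commonFactor n i k := by
  have hinv := invFact_sub_two (n + k - 2 * i)
  rw [show (n : ℤ) + k - 2 * i - 2 = n + k - 2 * (i + 1 : ℕ) by push_cast; ring] at hinv
  rw [f'nik, commonFactor, factorialFactor, hinv, Nat.factorial_succ (2 * n - k),
    show 2 * n - (i + 1) - k = 2 * n - i - k - 1 by lia,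
    show (n : ℤ) + (i + 1 : ℕ) - 2 * k + 1 = n + i - 2 * k + 2 by push_cast; ring]
  push_cast [Nat.cast_sub (show k ≤ 2 * n by lia)]
  ring

lemma mul_factorialFactor_succ (hi : i < n) (hk : k < n) :
    2 * (2 * n - 2 * k - 1) * (2 * n - k) * (2 * n - i - k - 1) * (k + 1) *
        factorialFactor n i (k + 1) =
      -((n - k + 1) * (n + k + 2) * (3 * n - k + 2) * factorialFactor n i k) := by
  obtain ⟨m, hm⟩ : ∃ m, n = k + m + 1 := ⟨n - k - 1, by lia⟩
  obtain ⟨d, hd⟩ : ∃ d, n = i + d + 1 := ⟨n - i - 1, by lia⟩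
  have hcat : (m + 2) * (catalan (m + 1) : ℚ) = 2 * (2 * m + 1) * catalan m :=
    mod_cast add_two_mul_catalan_succ m
  have hk_succ : factorialFactor n i (k + 1) =
      (-1) ^ (k + 2) * catalan m * (n + k + 2)! * (n + m)! * (m + d)! /
        ((k + 1)! * (2 * n + m + 2)!) := by
    rw [factorialFactor, show n - (k + 1) = m by lia, show 2 * n - (k + 1) = n + m by lia,
      show 2 * n - i - (k + 1) - 1 = m + d by lia, show 3 * n - (k + 1) + 2 = 2 * n + m + 2 by lia]
    rfl
  have hk_self : factorialFactor n i k =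
      (-1) ^ (k + 1) * catalan (m + 1) * (n + k + 1)! * (n + m + 1)! * (m + d + 1)! /
        (k ! * (2 * n + m + 3)!) := by
    rw [factorialFactor, show n - k = m + 1 by lia, show 2 * n - k = n + m + 1 by lia,
      show 2 * n - i - k - 1 = m + d + 1 by lia, show 3 * n - k + 2 = 2 * n + m + 3 by lia]
  rw [hk_succ, hk_self]
  simp only [Nat.factorial_succ, pow_succ]
  have hkQ : (k : ℚ) = n - m - 1 := by rw [hm]; push_cast; ring
  have hiQ : (i : ℚ) = n - d - 1 := by rw [hd]; push_cast; ring
  push_cast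
  field_simp
  rw [hkQ, hiQ]
  linear_combination -(n + m + 1 : ℚ) * (m + d + 1) * (2 * n - m + 1) * (2 * n + m + 3) * hcat

lemma zeilbergerCert_succ (hi : i < n) (hk : k ≤ n) :
    zeilbergerCert n i (k + 1) =
      3 * (n - i) * (n - k + 1) * (2 * n - k + 1) * (n + k + 2) * (3 * n - k + 2) *
        (n + i - 2 * k + 2) * (n + i - 2 * k + 1) * commonFactor n i k := by
  have hinv_two := invFact_sub_two (n + i - 2 * k + 2)
  have hinv_one := invFact_sub_one (n + k - 2 * i + 1)
  rcases hk.eq_or_lt with rfl | hlt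
  · -- The truncated subtractions at `k + 1 = n + 1` do no harm, since `1 / (n + i - 2 * k)! = 0`.
    rw [invFact_of_neg (by lia)] at hinv_two
    rw [zeilbergerCert_succ_self hi, commonFactor]
    push_cast at hinv_two
    linear_combination 3 * (k - i : ℚ) * (k + 1) * (2 * k + 2) * (2 * k + 2) * hinv_two *
      factorialFactor k i k * invFact (k + k - 2 * i)
  · rw [show (n : ℤ) + i - 2 * k + 2 - 2 = n + i - 2 * (k + 1 : ℕ) + 2 by lia] at hinv_two
    rw [show (n : ℤ) + k - 2 * i + 1 - 1 = n + k - 2 * i by ring,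
      show (n : ℤ) + k - 2 * i + 1 = n + (k + 1 : ℕ) - 2 * i by push_cast; ring] at hinv_one
    rw [zeilbergerCert, commonFactor, commonFactor, hinv_two, hinv_one]
    push_cast
    linear_combination 3 * (i - n : ℚ) * (2 * n - k + 1) * (n + i - 2 * k + 2) *
      (n + i - 2 * k + 1) * invFact (n + i - 2 * k + 2) * (n + k - 2 * i + 1) *
      invFact (n + (k + 1) - 2 * i) * mul_factorialFactor_succ hi hlt

lemma zeilbergerCert_succ_sub (hi : i < n) (hk : k ≤ n) :
    zeilbergerCert n i (k + 1) - zeilbergerCert n i k =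
      2 * (2 * n - 2 * i + 1) * (i + 1) * (2 * n + 1 - i) * f'nik n i k +
        (n - (i + 1)) * (3 * n - i + 2) * (n + i + 2) * f'nik n (i + 1) k := by
  rw [zeilbergerCert_succ hi hk, zeilbergerCert, f'nik_eq_mul_commonFactor hi hk,
    f'nik_succ_eq_mul_commonFactor hk]
  ring

lemma sum_f'nik_recurrence (hi : i < n) :
    2 * (2 * n - 2 * i + 1) * (i + 1) * (2 * n + 1 - i) * ∑ k ∈ Finset.range (n + 1), f'nik n i k +
      (n - (i + 1)) * (3 * n - i + 2) * (n + i + 2) *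
        ∑ k ∈ Finset.range (n + 1), f'nik n (i + 1) k = 0 := by
  calc _ = ∑ k ∈ Finset.range (n + 1), (zeilbergerCert n i (k + 1) - zeilbergerCert n i k) := by
        rw [Finset.mul_sum, Finset.mul_sum, ← Finset.sum_add_distrib]
        refine Finset.sum_congr rfl fun k hk ↦ ?_
        rw [zeilbergerCert_succ_sub hi (Finset.mem_range_succ_iff.mp hk)]
    _ = 0 := by
        rw [Finset.sum_range_sub, zeilbergerCert_succ_self hi, zeilbergerCert_zero, sub_zero]

lemma sum_f'nik_eq_zero_of_succ (hi : i < n)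
    (hsucc : i + 1 < n → ∑ k ∈ Finset.range (n + 1), f'nik n (i + 1) k = 0) :
    ∑ k ∈ Finset.range (n + 1), f'nik n i k = 0 := by
  have hiQ : (i : ℚ) < n := mod_cast hi
  have hcoeff : 0 < 2 * (2 * n - 2 * i + 1) * (i + 1) * (2 * n + 1 - i : ℚ) := by
    have h₁ : (0 : ℚ) < 2 * n - 2 * i + 1 := by linarith
    have h₂ : (0 : ℚ) < 2 * n + 1 - i := by linarith [n.cast_nonneg (α := ℚ)]
    positivity
  have hnext : (n - (i + 1) : ℚ) * ∑ k ∈ Finset.range (n + 1), f'nik n (i + 1) k = 0 := by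
    rcases (Nat.succ_le_of_lt hi).eq_or_lt with rfl | hlt
    · push_cast
      ring
    · rw [hsucc hlt, mul_zero]
  refine (mul_eq_zero.mp ?_).resolve_left hcoeff.ne'
  linear_combination sum_f'nik_recurrence hi - (3 * n - i + 2 : ℚ) * (n + i + 2) * hnext

end

/-- For all `n ≥ 1` and `0 ≤ i ≤ n−1`: `Σ_{k=0}^{n} f'_{n,i}(k) = 0`. -/
theorem sum_f'nik (n : ℕ) (hn : 1 ≤ n) (i : ℕ) (hi : i + 1 ≤ n) :
    ∑ k ∈ Finset.range (n+1), f'nik n i k = 0 := by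
  have hi' : i ≤ n - 1 := Nat.le_sub_one_of_lt hi
  induction hi' using Nat.decreasingInduction with
  | self => exact sum_f'nik_eq_zero_of_succ hi fun hlt ↦ by lia
  | of_succ j _ ih => exact sum_f'nik_eq_zero_of_succ hi fun hlt ↦ ih hlt
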